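/- Every proper closed subgroup H of PGL(2, ℂ) of positive dimension whose quotient PGL(2)/H contains an open Borel orbit (i.e., H is spherical) is, up to conjugation, one of: a maximal torus, the normalizer of a maximal torus, or a subgroup containing a maximal unipotent subgroup. -/

import Mathlib

/-!
STATEMENT 4: Every proper Zariski-closed subgroup H of PGL(2, ℂ) of positive dimension
which is spherical (the Borel subgroup B has a dense orbit in PGL(2)/H, equivalently
B·g·H is Zariski dense in PGL(2) for some g) is, up to conjugation, a maximal torus,
the normalizer of a maximal torus, or a subgroup containing a maximal unipotent subgroup.

Model: PGL(2, ℂ) := SL(2, ℂ)/center.  Zariski closedness and density of subsets of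
PGL(2) are expressed via their preimages in SL(2) and polynomials in the matrix entries.
"Positive dimension" of a Zariski-closed subgroup is expressed by it being infinite.
-/

abbrev SL2 := Matrix.SpecialLinearGroup (Fin 2) ℂ

abbrev PGL2 := SL2 ⧸ Subgroup.center SL2

/-- the projection SL(2, ℂ) → PGL(2, ℂ) -/
def pglPr : SL2 →* PGL2 := QuotientGroup.mk' (Subgroup.center SL2)

/-- evaluation of a polynomial in the matrix entries at a point of SL(2, ℂ) -/
noncomputable def evalSL2 (f : MvPolynomial (Fin 2 × Fin 2) ℂ) (A : SL2) : ℂ :=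
  MvPolynomial.eval (fun p => A.val p.1 p.2) f

/-- a subset of PGL(2, ℂ) is Zariski closed if its preimage in SL(2, ℂ) is the zero locus
of a set of polynomials in the matrix entries -/
def IsZariskiClosed (s : Set PGL2) : Prop :=
  ∃ P : Set (MvPolynomial (Fin 2 × Fin 2) ℂ),
    ∀ A : SL2, pglPr A ∈ s ↔ ∀ f ∈ P, evalSL2 f A = 0

/-- a subset of PGL(2, ℂ) is Zariski dense if every polynomial vanishing on its preimage
in SL(2, ℂ) vanishes on all of SL(2, ℂ) -/
def IsZariskiDense (s : Set PGL2) : Prop :=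
  ∀ f : MvPolynomial (Fin 2 × Fin 2) ℂ,
    (∀ A : SL2, pglPr A ∈ s → evalSL2 f A = 0) → ∀ A : SL2, evalSL2 f A = 0

/-- the Borel subgroup of PGL(2, ℂ): the image of the upper triangular matrices -/
def borelPGL2 : Set PGL2 := pglPr '' {A : SL2 | A.val 1 0 = 0}

/-- the standard maximal torus of PGL(2, ℂ): the image of the diagonal matrices -/
def torusPGL2 : Set PGL2 := pglPr '' {A : SL2 | A.val 1 0 = 0 ∧ A.val 0 1 = 0}

/-- the normalizer of the standard maximal torus in PGL(2, ℂ) -/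
def torusNormalizerPGL2 : Set PGL2 :=
  {x : PGL2 | ∀ t ∈ torusPGL2, x * t * x⁻¹ ∈ torusPGL2 ∧ x⁻¹ * t * x ∈ torusPGL2}

/-- the standard maximal unipotent subgroup of PGL(2, ℂ): the image of the upper
unitriangular matrices -/
def unipPGL2 : Set PGL2 := pglPr '' {A : SL2 | A.val 1 0 = 0 ∧ A.val 0 0 = 1}

/-!
Let `K` be the preimage of `H` in `SL(2, k)`, where `k = ℂ`. The values of a regular function on
`K` form its spectrum in the coordinate ring, whose dimension is countable; over an uncountable
field a countable spectrum is therefore finite. Applied to the trace: either some `A ∈ K` has trace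
transcendental over `ℚ`, or the trace takes finitely many values on `K`. In the latter case
Burnside's argument gives `A ≠ 1` in `K` with trace `2`, and the powers of this unipotent element
are dense in a maximal unipotent subgroup. In the former case the eigenvalues of `A` are not roots
of unity, so its powers are dense in a maximal torus `T ≤ K`. If `B ∈ K` does not normalize `T`,
then `B` has a nonzero diagonal and a nonzero off-diagonal entry, and `D * B ≠ 1` has trace `2` for
some `D ∈ T`. Hence `K` contains a nontrivial unipotent element or lies between `T` and its
normalizer, in which `T` has index two.
-/

section Spectrum

variable {k A : Type*} [Field k]

open Polynomial

theorem spectrum_finite_of_isAlgebraic [Ring A] [Algebra k A] {a : A} (ha : IsAlgebraic k a) :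
    (spectrum k a).Finite := by
  obtain ⟨p, hp, hpa⟩ := ha
  cases subsingleton_or_nontrivial A
  · rw [spectrum.of_subsingleton]
    exact Set.finite_empty
  refine (p.rootSet_finite k).subset fun c hc ↦ ?_
  have eval_mem := spectrum.subset_polynomial_aeval a p ⟨c, hc, rfl⟩
  rw [hpa, spectrum.zero_eq] at eval_mem
  exact (mem_rootSet_of_ne hp).2 (by simpa [aeval_def] using eval_mem)

variable [CommRing A] [Algebra k A]

/- Clearing denominators in a linear relation gives a polynomial `p` with `p(a) = 0`; evaluating
`p = 0` at one of the poles isolates the corresponding coefficient. -/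
theorem linearIndependent_resolvent {a : A} (ha : Transcendental k a) :
    LinearIndependent k fun c : resolventSet k a ↦ resolvent a (c : k) := by
  classical
  rw [linearIndependent_iff']
  intro s m hm c hc
  let p : k[X] := ∑ d ∈ s, C (m d) * ∏ e ∈ s.erase d, (C (e : k) - X)
  have aeval_p : aeval a p = 0 := by
    have clear_denominator : ∀ d ∈ s,
        resolvent a (d : k) * ∏ e ∈ s, (algebraMap k A e - a) =
          ∏ e ∈ s.erase d, (algebraMap k A e - a) := fun d hd ↦ by
      rw [← s.mul_prod_erase _ hd, ← mul_assoc, resolvent,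
        Ring.inverse_mul_cancel _ (spectrum.mem_resolventSet_iff.1 d.2), one_mul]
    calc aeval a p = ∑ d ∈ s, m d • ∏ e ∈ s.erase d, (algebraMap k A e - a) := by
          simp [p, Algebra.smul_def]
      _ = (∑ d ∈ s, m d • resolvent a (d : k)) * ∏ e ∈ s, (algebraMap k A e - a) := by
          rw [Finset.sum_mul]
          exact Finset.sum_congr rfl fun d hd ↦ by rw [smul_mul_assoc, clear_denominator d hd]
      _ = 0 := by rw [hm, zero_mul]
  have eval_p : p.eval (c : k) = m c * ∏ e ∈ s.erase c, ((e : k) - c) := by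
    simp only [p, eval_finsetSum, eval_mul, eval_C, eval_prod, eval_sub, eval_X]
    refine Finset.sum_eq_single_of_mem c hc fun d _ hdc ↦ ?_
    rw [Finset.prod_eq_zero (Finset.mem_erase.2 ⟨hdc.symm, hc⟩) (sub_self _), mul_zero]
  rw [transcendental_iff.1 ha p aeval_p, eval_zero] at eval_p
  refine (mul_eq_zero.1 eval_p.symm).resolve_right (Finset.prod_ne_zero_iff.2 fun e he ↦ ?_)
  exact sub_ne_zero.2 (Subtype.coe_injective.ne (Finset.ne_of_mem_erase he))

open Cardinal in
theorem spectrum_finite_of_countable [Uncountable k] (hA : Module.rank k A ≤ ℵ₀) {a : A}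
    (ha : (spectrum k a).Countable) : (spectrum k a).Finite := by
  refine spectrum_finite_of_isAlgebraic (by_contra fun hna ↦ ?_)
  have resolventSet_countable : (resolventSet k a).Countable := by
    rw [← Set.countable_coe_iff, ← mk_le_aleph0_iff, ← lift_le_aleph0]
    exact (linearIndependent_resolvent hna).cardinal_lift_le_rank.trans (lift_le_aleph0.2 hA)
  refine Set.not_countable_univ (α := k) ?_
  rw [← Set.union_compl_self (resolventSet k a)]
  exact resolventSet_countable.union ha

variable (k A) in
open Cardinal in
theorem rank_le_aleph0_of_finiteType [Algebra.FiniteType k A] : Module.rank k A ≤ ℵ₀ := by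
  obtain ⟨n, f, hf⟩ := Algebra.FiniteType.iff_quotient_mvPolynomial''.1 ‹Algebra.FiniteType k A›
  rw [← lift_le_aleph0]
  refine (f.toLinearMap.lift_rank_le_of_surjective hf).trans (lift_le_aleph0.2 ?_)
  rw [MvPolynomial.rank_eq_lift, lift_le_aleph0]
  exact mk_le_aleph0

end Spectrum

section ZeroLocus

variable {k σ : Type*} [Field k] [IsAlgClosed k] [Finite σ]

open MvPolynomial

theorem spectrum_mk_eq_image_zeroLocus (I : Ideal (MvPolynomial σ k)) (f : MvPolynomial σ k) :
    spectrum k (Ideal.Quotient.mk I f) = (fun x ↦ eval x f) '' zeroLocus k I := by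
  refine Set.Subset.antisymm (fun c hc ↦ ?_) ?_
  · obtain ⟨m, hm, hcm⟩ := exists_max_ideal_of_mem_nonunits (spectrum.mem_iff.1 hc)
    obtain ⟨x, hx⟩ := eq_vanishingIdeal_singleton_of_isMaximal k
      (Ideal.comap_isMaximal_of_surjective _ Ideal.Quotient.mk_surjective (K := m))
    have eval_eq_zero : ∀ g, Ideal.Quotient.mk I g ∈ m → eval x g = 0 := fun g hg ↦
      (mem_vanishingIdeal_singleton_iff x g).1 (hx ▸ Ideal.mem_comap.2 hg)
    refine ⟨x, mem_zeroLocus_iff.2 fun g hg ↦ eval_eq_zero g ?_, ?_⟩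
    · rw [Ideal.Quotient.eq_zero_iff_mem.2 hg]
      exact m.zero_mem
    · have eval_sub_eq_zero := eval_eq_zero (C c - f) hcm
      rwa [map_sub, eval_C, sub_eq_zero, eq_comm] at eval_sub_eq_zero
  · rintro _ ⟨x, hx, rfl⟩
    exact AlgHom.apply_mem_spectrum
      (Ideal.Quotient.liftₐ I (aeval x) (mem_zeroLocus_iff.1 hx)) (Ideal.Quotient.mk I f)

theorem finite_image_eval_zeroLocus_of_countable [Uncountable k] {I : Ideal (MvPolynomial σ k)}
    {f : MvPolynomial σ k} (hf : ((fun x ↦ eval x f) '' zeroLocus k I).Countable) :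
    ((fun x ↦ eval x f) '' zeroLocus k I).Finite := by
  rw [← spectrum_mk_eq_image_zeroLocus] at hf ⊢
  exact spectrum_finite_of_countable (rank_le_aleph0_of_finiteType k (MvPolynomial σ k ⧸ I)) hf

end ZeroLocus

section Burnside

/- Choose finitely many `h` in `G` whose images span the span of `ρ(G)`. If `τ (ρ (g * h))` and
`τ (ρ (g' * h))` agree for all of them, then so they do for `h = g'⁻¹`. -/
theorem exists_ne_one_map_eq_of_finite_range {k A M G : Type*} [CommSemiring k] [Semiring A]
    [Algebra k A] [IsNoetherian k A] [AddCommMonoid M] [Module k M] [Group G] [Infinite G]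
    (ρ : G →* A) (τ : A →ₗ[k] M) (hτ : (Set.range (τ ∘ ρ)).Finite) :
    ∃ g ≠ 1, τ (ρ g) = τ 1 := by
  obtain ⟨B, hB_sub, hB_span⟩ := (Submodule.fg_span_iff_fg_span_finset_subset (Set.range ρ)).1
    (IsNoetherian.noetherian (Submodule.span k (Set.range ρ)))
  have := hτ.to_subtype
  choose h hh using fun b : B ↦ hB_sub b.2
  let F (g : G) (b : B) : Set.range (τ ∘ ρ) := ⟨τ (ρ (g * h b)), g * h b, rfl⟩
  obtain ⟨g₁, g₂, hne, hF⟩ := Finite.exists_ne_map_eq_of_infinite F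
  have eqOn_B : Set.EqOn (τ ∘ₗ LinearMap.mulLeft k (ρ g₁)) (τ ∘ₗ LinearMap.mulLeft k (ρ g₂)) B :=
    fun b hb ↦ by simpa [F, hh] using congrArg Subtype.val (congrFun hF ⟨b, hb⟩)
  refine ⟨g₁ * g₂⁻¹, mul_inv_eq_one.not.2 hne, ?_⟩
  have inv_mem : ρ g₂⁻¹ ∈ Submodule.span k (B : Set A) :=
    hB_span ▸ Submodule.subset_span ⟨g₂⁻¹, rfl⟩
  simpa [← map_mul] using LinearMap.eqOn_span eqOn_B inv_mem

end Burnside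

section SpecialLinear

open Matrix hiding transvection
open Matrix.SpecialLinearGroup MatrixGroups Pointwise

variable {n k : Type*} [Fintype n] [DecidableEq n] [Field k]

theorem trace_conj (Q A : SpecialLinearGroup n k) : (Q * A * Q⁻¹).val.trace = A.val.trace := by
  rw [Matrix.SpecialLinearGroup.coe_mul, trace_mul_comm, ← Matrix.SpecialLinearGroup.coe_mul,
    inv_mul_cancel_left]

/-- The one-parameter additive group `b ↦ transvection hij b`. -/
def transvectionHom {i j : n} (hij : i ≠ j) : Multiplicative k →* SpecialLinearGroup n k where
  toFun b := transvection hij b.toAdd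
  map_one' := transvection_coeff_zero hij
  map_mul' b c := transvection_add hij b.toAdd c.toAdd

/-- The one-parameter multiplicative group `a ↦ diag2n hij a`. -/
noncomputable def diag2nHom {i j : n} (hij : i ≠ j) : kˣ →* SpecialLinearGroup n k where
  toFun a := diag2n hij a a.ne_zero
  map_one' := by ext; simp [diag2n_coe]
  map_mul' a b := by
    refine Subtype.ext (Eq.trans ?_ (diagonal_mul_diagonal _ _).symm)
    refine congrArg diagonal (funext fun x ↦ ?_)
    split_ifs <;> simp [mul_comm]

/-- Evaluation of Laurent polynomials at a unit. -/
noncomputable def laurentEval (a : kˣ) : LaurentPolynomial k →ₐ[k] k where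
  __ := LaurentPolynomial.eval₂ (RingHom.id k) a
  commutes' c := LaurentPolynomial.eval₂_C _ _ c

theorem laurentEval_T (a : kˣ) (m : ℤ) : laurentEval a (.T m) = ((a ^ m : kˣ) : k) :=
  LaurentPolynomial.eval₂_T _ _ m

open LaurentPolynomial in
theorem finite_setOf_laurentEval_eq_zero {f : k[T;T⁻¹]} (hf : f ≠ 0) :
    {a | laurentEval a f = 0}.Finite := by
  obtain ⟨m, p, hp⟩ := f.exists_T_pow
  have hp0 : p ≠ 0 := by
    rw [← Polynomial.toLaurent_ne_zero, hp]
    exact (isUnit_T (R := k) m).mul_left_eq_zero.not.2 hf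
  refine ((p.rootSet_finite k).preimage Units.val_injective.injOn).subset fun a ha ↦ ?_
  rw [Set.mem_preimage, Polynomial.mem_rootSet_of_ne hp0]
  calc Polynomial.aeval (a : k) p = laurentEval a (Polynomial.toLaurent p) :=
        (eval₂_toLaurent _ _ p).symm
    _ = 0 := by rw [hp, map_mul, ha, zero_mul]

/-- A set of matrices in `SL(n, k)` is Zariski closed if it is cut out by polynomials in the matrix
entries. For the preimage in `SL(2, ℂ)` of a set `s` in `PGL2` this unfolds to
`IsZariskiClosed s`. -/
def IsZariskiClosedSL (s : Set (SpecialLinearGroup n k)) : Prop :=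
  ∃ P : Set (MvPolynomial (n × n) k), ∀ A : SpecialLinearGroup n k,
    A ∈ s ↔ ∀ f ∈ P, MvPolynomial.eval (fun p ↦ A.val p.1 p.2) f = 0

namespace IsZariskiClosedSL

variable {s : Set (SpecialLinearGroup n k)} {K : Subgroup (SpecialLinearGroup n k)}

/- The entries of `M` are regular functions on the parameter space `ι`, and `ev i` is their
evaluation at the point `i`. -/
theorem exists_forall_mem_iff {ι R : Type*} [CommRing R] [Algebra k R]
    (hs : IsZariskiClosedSL s) (φ : ι → SpecialLinearGroup n k) (ev : ι → R →ₐ[k] k)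
    (M : Matrix n n R) (hM : ∀ i, (φ i).val = M.map (ev i)) :
    ∃ J : Set R, ∀ i, φ i ∈ s ↔ ∀ r ∈ J, ev i r = 0 := by
  obtain ⟨P, hP⟩ := hs
  refine ⟨MvPolynomial.aeval (fun p ↦ M p.1 p.2) '' P, fun i ↦ ?_⟩
  have eval_eq (f : MvPolynomial (n × n) k) : MvPolynomial.eval (fun p ↦ (φ i).val p.1 p.2) f =
      ev i (MvPolynomial.aeval (fun p ↦ M p.1 p.2) f) := by
    rw [MvPolynomial.comp_aeval_apply, hM]
    rfl
  simp only [hP, Set.forall_mem_image, eval_eq]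

theorem conj_smul (hK : IsZariskiClosedSL (K : Set (SpecialLinearGroup n k)))
    (Q : SpecialLinearGroup n k) :
    IsZariskiClosedSL ((MulAut.conj Q • K : Subgroup _) : Set (SpecialLinearGroup n k)) := by
  let ev (A : SpecialLinearGroup n k) : MvPolynomial (n × n) k →ₐ[k] k :=
    MvPolynomial.aeval fun p ↦ A.val p.1 p.2
  let M : Matrix n n (MvPolynomial (n × n) k) :=
    (Q⁻¹).val.map MvPolynomial.C * mvPolynomialX n n k * Q.val.map MvPolynomial.C
  obtain ⟨J, hJ⟩ := hK.exists_forall_mem_iff (fun A ↦ Q⁻¹ * A * Q) ev M fun A ↦ by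
    ext i j
    simp [M, ev, mul_apply, map_sum, map_mul]
  refine ⟨J, fun A ↦ ?_⟩
  rw [SetLike.mem_coe, Subgroup.mem_pointwise_smul_iff_inv_smul_mem, ← map_inv, MulAut.smul_def,
    MulAut.conj_apply, inv_inv]
  exact hJ A

theorem range_le_of_mem {G R : Type*} [Group G] [CommRing R] [Algebra k R]
    (hK : IsZariskiClosedSL (K : Set (SpecialLinearGroup n k))) (φ : G →* SpecialLinearGroup n k)
    (ev : G → R →ₐ[k] k) (hev : ∀ r ≠ 0, {g | ev g r = 0}.Finite)
    (M : Matrix n n R) (hM : ∀ g, (φ g).val = M.map (ev g))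
    {g : G} (hg : ¬ IsOfFinOrder g) (hgK : φ g ∈ K) : φ.range ≤ K := by
  obtain ⟨J, hJ⟩ := hK.exists_forall_mem_iff φ ev M hM
  have powers_infinite : (Set.range (g ^ · : ℕ → G)).Infinite :=
    Set.infinite_range_of_injective (injective_pow_iff_not_isOfFinOrder.2 hg)
  have eq_zero_of_mem : ∀ r ∈ J, r = 0 := fun r hr ↦ by
    by_contra hr0
    refine powers_infinite ((hev r hr0).subset ?_)
    rintro _ ⟨m, rfl⟩
    exact (hJ _).1 (map_pow φ g m ▸ pow_mem hgK m) r hr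
  rintro _ ⟨x, rfl⟩
  exact (hJ x).2 fun r hr ↦ by rw [eq_zero_of_mem r hr, map_zero]

theorem transvectionHom_range_le [CharZero k]
    (hK : IsZariskiClosedSL (K : Set (SpecialLinearGroup n k))) {i j : n} (hij : i ≠ j) {b : k}
    (hb : b ≠ 0) (hbK : transvection hij b ∈ K) : (transvectionHom (k := k) hij).range ≤ K := by
  refine hK.range_le_of_mem (R := Polynomial k) (transvectionHom hij)
    (fun c ↦ Polynomial.aeval c.toAdd) (fun f hf ↦ ?_)
    (1 + single i j Polynomial.X) (fun c ↦ ?_) (g := .ofAdd b) ?_ hbK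
  · exact (f.rootSet_finite k).subset fun c hc ↦ (Polynomial.mem_rootSet_of_ne hf).2 hc
  · rw [Matrix.map_add _ (map_add _), Matrix.map_one _ (map_zero _) (map_one _), map_single,
      Polynomial.aeval_X]
    rfl
  · exact isOfFinOrder_ofAdd_iff.not.2 (not_isOfFinAddOrder_of_isAddTorsionFree hb)

theorem diag2nHom_range_le
    (hK : IsZariskiClosedSL (K : Set (SpecialLinearGroup n k))) {i j : n} (hij : i ≠ j) {a : kˣ}
    (ha : ¬ IsOfFinOrder a) (haK : diag2nHom hij a ∈ K) : (diag2nHom (k := k) hij).range ≤ K := by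
  refine hK.range_le_of_mem (diag2nHom hij) laurentEval
    (fun f hf ↦ finite_setOf_laurentEval_eq_zero hf)
    (diagonal fun x ↦ if x = i then .T 1 else if x = j then .T (-1) else 1) (fun a ↦ ?_) ha haK
  rw [diagonal_map (map_zero _)]
  refine congrArg diagonal (funext fun x ↦ ?_)
  split_ifs
  · simp [laurentEval_T]
  · simp [laurentEval_T]
  · exact (map_one _).symm

theorem exists_zeroLocus (hs : IsZariskiClosedSL s) : ∃ I : Ideal (MvPolynomial (n × n) k),
    MvPolynomial.zeroLocus k I = (fun A p ↦ A.val p.1 p.2) '' s := by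
  obtain ⟨P, hP⟩ := hs
  refine ⟨Ideal.span (insert ((mvPolynomialX n n k).det - 1) P), ?_⟩
  ext x
  have det_iff : MvPolynomial.aeval x ((mvPolynomialX n n k).det - 1) = 0 ↔
      (of fun i j ↦ x (i, j)).det = 1 := by
    rw [map_sub, map_one, sub_eq_zero, MvPolynomial.aeval_eq_eval, eval_det_mvPolynomialX]
  simp only [MvPolynomial.zeroLocus_span, Set.mem_ofPred_eq, Set.forall_mem_insert, det_iff]
  constructor
  · rintro ⟨hdet, hx⟩
    exact ⟨⟨_, hdet⟩, (hP _).2 hx, rfl⟩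
  · rintro ⟨A, hA, rfl⟩
    exact ⟨A.det_coe, (hP A).1 hA⟩

theorem finite_image_trace [IsAlgClosed k] [Uncountable k] (hs : IsZariskiClosedSL s)
    (hcount : ((fun A ↦ A.val.trace) '' s).Countable) : ((fun A ↦ A.val.trace) '' s).Finite := by
  obtain ⟨I, hI⟩ := hs.exists_zeroLocus
  have eval_trace (A : SpecialLinearGroup n k) :
      MvPolynomial.eval (fun p ↦ A.val p.1 p.2) (mvPolynomialX n n k).trace = A.val.trace := by
    simp [trace]
  have image_eq : (fun A ↦ A.val.trace) '' s =
      (fun x ↦ MvPolynomial.eval x (mvPolynomialX n n k).trace) '' MvPolynomial.zeroLocus k I := by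
    simp only [hI, Set.image_image, eval_trace]
  rw [image_eq] at hcount ⊢
  exact finite_image_eval_zeroLocus_of_countable hcount

theorem exists_mem_transcendental_trace [CharZero k] [IsAlgClosed k] [Uncountable k]
    (hK : IsZariskiClosedSL (K : Set (SpecialLinearGroup n k)))
    (hinf : (K : Set (SpecialLinearGroup n k)).Infinite)
    (hunip : ∀ A ∈ K, A.val.trace = Fintype.card n → A = 1) :
    ∃ A ∈ K, Transcendental ℚ A.val.trace := by
  by_contra! halg
  have traces_algebraic : (fun A ↦ A.val.trace) '' (K : Set (SpecialLinearGroup n k)) ⊆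
      {x | IsAlgebraic ℚ x} := by
    rintro _ ⟨A, hA, rfl⟩
    exact not_not.1 (halg A hA)
  have traces_finite := hK.finite_image_trace ((Algebraic.countable ℚ k).mono traces_algebraic)
  have : Infinite K := hinf.to_subtype
  obtain ⟨A, hA1, hA⟩ := exists_ne_one_map_eq_of_finite_range (k := k)
    (coeMonoidHom.comp K.subtype) (traceLinearMap n k k) <| traces_finite.subset <| by
      rintro _ ⟨A, rfl⟩
      exact ⟨A, A.2, rfl⟩
  exact hA1 (Subtype.ext (hunip A A.2 (hA.trans trace_one)))

end IsZariskiClosedSL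

end SpecialLinear

section SpecialLinearTwo

open Matrix hiding transvection
open Matrix.SpecialLinearGroup MatrixGroups Pointwise

variable {k : Type*} [Field k]

/-- The standard maximal torus of `SL(2, k)`. -/
def diagonalTorus (k : Type*) [Field k] : Subgroup SL(2, k) where
  carrier := {A | A.val 1 0 = 0 ∧ A.val 0 1 = 0}
  one_mem' := by simp
  mul_mem' hA hB := by simp_all [mul_apply]
  inv_mem' hA := by simpa [coe_inv, adjugate_fin_two, and_comm] using hA

/-- The standard maximal unipotent subgroup of `SL(2, k)`. -/
def upperUnipotent (k : Type*) [Field k] : Subgroup SL(2, k) where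
  carrier := {A | A.val 1 0 = 0 ∧ A.val 0 0 = 1}
  one_mem' := by simp
  mul_mem' hA hB := by simp_all [mul_apply]
  inv_mem' {A} hA := by
    have det_eq := A.det_coe
    rw [det_fin_two, hA.1, hA.2] at det_eq
    simp_all [coe_inv, adjugate_fin_two]

theorem mem_diagonalTorus_iff {A : SL(2, k)} :
    A ∈ diagonalTorus k ↔ A.val 1 0 = 0 ∧ A.val 0 1 = 0 := Iff.rfl

theorem diag2_mem_diagonalTorus {a : k} (ha : a ≠ 0) : diag2 a ha ∈ diagonalTorus k := by
  simp [mem_diagonalTorus_iff, diag2_coe']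

theorem diagonalTorus_le_range_diag2nHom :
    diagonalTorus k ≤ (diag2nHom (k := k) (zero_ne_one (α := Fin 2))).range := by
  rintro A ⟨h10, h01⟩
  obtain ⟨a, b, ha, rfl⟩ := A.fin_two_exists_eq_mk_of_apply_zero_one_eq_zero h10
  obtain rfl : b = 0 := h01
  exact ⟨Units.mk0 a ha, Subtype.ext (diag2_coe' ha)⟩

theorem transvection_zero_one_coe (b : k) :
    (transvection (zero_ne_one (α := Fin 2)) b).val = !![1, b; 0, 1] := by
  ext i j
  fin_cases i <;> fin_cases j <;> simp [transvection_coe]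

theorem upperUnipotent_le_range_transvectionHom :
    upperUnipotent k ≤ (transvectionHom (k := k) (zero_ne_one (α := Fin 2))).range := by
  rintro A ⟨h10, h00⟩
  obtain ⟨a, b, ha, rfl⟩ := A.fin_two_exists_eq_mk_of_apply_zero_one_eq_zero h10
  obtain rfl : a = 1 := h00
  exact ⟨.ofAdd b, Subtype.ext ((transvection_zero_one_coe b).trans (by simp))⟩

theorem exists_conj_apply_one_zero_eq_zero [IsAlgClosed k] (A : SL(2, k)) :
    ∃ Q : SL(2, k), (Q * A * Q⁻¹).val 1 0 = 0 := by
  obtain ⟨c, hc⟩ := Module.End.exists_eigenvalue A.val.toLin'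
  obtain ⟨v, hv⟩ := hc.exists_hasEigenvector
  have Av : A.val *ᵥ v = c • v := hv.apply_eq_smul
  have v_coprime : IsCoprime (v 0) (v 1) := by
    rw [Semifield.isCoprime_iff]
    by_contra! h
    exact hv.2 (by ext i; fin_cases i; exacts [h.1, h.2])
  obtain ⟨g, hg0, hg1⟩ := v_coprime.exists_SL2_col 0
  have Av0 := congrFun Av 0
  have Av1 := congrFun Av 1
  simp only [mulVec, dotProduct, Fin.sum_univ_two, Pi.smul_apply, smul_eq_mul] at Av0 Av1
  have apply_eq : (g⁻¹ * A * g).val 1 0 =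
      -v 1 * (A.val 0 0 * v 0 + A.val 0 1 * v 1) + v 0 * (A.val 1 0 * v 0 + A.val 1 1 * v 1) := by
    simp [mul_assoc, coe_inv, adjugate_fin_two, mul_apply, Fin.sum_univ_two, hg0, hg1]
  refine ⟨g⁻¹, ?_⟩
  rw [inv_inv, apply_eq, Av0, Av1]
  ring

theorem exists_conj_eq_transvection [IsAlgClosed k] {A : SL(2, k)} (hA : A ≠ 1)
    (htr : A.val.trace = 2) :
    ∃ Q : SL(2, k), ∃ b ≠ 0, Q * A * Q⁻¹ = transvection zero_ne_one b := by
  obtain ⟨Q, hQ⟩ := exists_conj_apply_one_zero_eq_zero A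
  obtain ⟨a, b, ha, hQA⟩ := fin_two_exists_eq_mk_of_apply_zero_one_eq_zero _ hQ
  have trace_eq : a + a⁻¹ = 2 := by
    rw [← htr, ← trace_conj Q, hQA, trace_fin_two_of]
  obtain rfl : a = 1 := by
    field_simp at trace_eq
    rw [← sub_eq_zero, ← sq_eq_zero_iff]
    linear_combination trace_eq
  have conj_eq : Q * A * Q⁻¹ = transvection zero_ne_one b := by
    rw [hQA]
    exact Subtype.ext (by simp [transvection_zero_one_coe])
  refine ⟨Q, b, ?_, conj_eq⟩
  rintro rfl
  rw [transvection_coeff_zero, conj_eq_one_iff] at conj_eq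
  exact hA conj_eq

theorem exists_conj_eq_diag2nHom [IsAlgClosed k] {A : SL(2, k)} (htr : A.val.trace ^ 2 ≠ 4) :
    ∃ (Q : SL(2, k)) (a : kˣ), Q * A * Q⁻¹ = diag2nHom zero_ne_one a := by
  obtain ⟨Q, hQ⟩ := exists_conj_apply_one_zero_eq_zero A
  obtain ⟨a, b, ha, hQA⟩ := fin_two_exists_eq_mk_of_apply_zero_one_eq_zero _ hQ
  have a_ne_inv : a - a⁻¹ ≠ 0 := fun h ↦ htr <| by
    rw [← trace_conj Q, hQA, trace_fin_two_of]
    linear_combination (a - a⁻¹) * h + 4 * mul_inv_cancel₀ ha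
  obtain ⟨u, hu⟩ : ∃ u, (a - a⁻¹) * u = b := ⟨_, mul_div_cancel₀ _ a_ne_inv⟩
  let U : SL(2, k) := transvection zero_ne_one u
  refine ⟨U * Q, Units.mk0 a ha, ?_⟩
  have U_mul : U * (Q * A * Q⁻¹) = diag2 a ha * U := by
    refine Subtype.ext ?_
    rw [Matrix.SpecialLinearGroup.coe_mul, congrArg Subtype.val hQA,
      Matrix.SpecialLinearGroup.coe_mul, transvection_zero_one_coe, diag2_coe', mul_fin_two,
      mul_fin_two]
    congrm !![?_, ?_; ?_, ?_]
    · ring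
    · linear_combination -hu
    · ring
    · ring
  calc U * Q * A * (U * Q)⁻¹ = U * (Q * A * Q⁻¹) * U⁻¹ := by group
    _ = diag2 a ha := by rw [U_mul, mul_inv_cancel_right]

theorem isAlgebraic_trace_diag2nHom {F : Type*} [Field F] [Algebra F k] {a : kˣ}
    (ha : IsOfFinOrder a) :
    IsAlgebraic F (diag2nHom (zero_ne_one (α := Fin 2)) a).val.trace := by
  obtain ⟨m, hm, ham⟩ := isOfFinOrder_iff_pow_eq_one.1 ha
  have a_algebraic : IsAlgebraic F (a : k) := IsAlgebraic.of_pow hm <| by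
    rw [← Units.val_pow_eq_pow_val, ham, Units.val_one]
    exact isAlgebraic_one
  have trace_eq : (diag2nHom (zero_ne_one (α := Fin 2)) a).val.trace = a + (a : k)⁻¹ :=
    (congrArg trace (diag2_coe' a.ne_zero)).trans (trace_fin_two_of _ _ _ _)
  rw [trace_eq]
  exact a_algebraic.add a_algebraic.inv

theorem conj_diag2_apply_one_zero (A : SL(2, k)) {t : k} (ht : t ≠ 0) :
    (A * diag2 t ht * A⁻¹).val 1 0 = A.val 1 0 * A.val 1 1 * (t - t⁻¹) := by
  simp only [Matrix.SpecialLinearGroup.coe_mul, diag2_coe', coe_inv, adjugate_fin_two, mul_apply,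
    of_apply, cons_val', cons_val_fin_one, Fin.sum_univ_two, cons_val_zero, cons_val_one]
  ring

theorem conj_diag2_apply_zero_one (A : SL(2, k)) {t : k} (ht : t ≠ 0) :
    (A * diag2 t ht * A⁻¹).val 0 1 = A.val 0 0 * A.val 0 1 * (t⁻¹ - t) := by
  simp only [Matrix.SpecialLinearGroup.coe_mul, diag2_coe', coe_inv, adjugate_fin_two, mul_apply,
    of_apply, cons_val', cons_val_fin_one, Fin.sum_univ_two, cons_val_zero, cons_val_one]
  ring

theorem mem_normalizer_diagonalTorus_iff [Infinite k] {A : SL(2, k)} :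
    A ∈ Subgroup.normalizer (diagonalTorus k : Set SL(2, k)) ↔
      A ∈ diagonalTorus k ∨ (A.val 0 0 = 0 ∧ A.val 1 1 = 0) := by
  have det_eq := A.det_coe
  rw [det_fin_two] at det_eq
  constructor
  · intro hA
    classical
    obtain ⟨t, ht⟩ := Infinite.exists_notMem_finset ({0, 1, -1} : Finset k)
    obtain ⟨ht0, ht1, ht2⟩ : t ≠ 0 ∧ t ≠ 1 ∧ t ≠ -1 := by simpa using ht
    have sub_inv_ne : t - t⁻¹ ≠ 0 := fun h ↦ by
      rcases self_eq_inv₀.1 (sub_eq_zero.1 h) with h | h | h <;> contradiction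
    have sub_inv_ne' : t⁻¹ - t ≠ 0 := neg_sub t t⁻¹ ▸ neg_ne_zero.2 sub_inv_ne
    obtain ⟨h10, h01⟩ := (hA _).1 (diag2_mem_diagonalTorus ht0)
    have row_one : A.val 1 0 * A.val 1 1 = 0 :=
      (mul_eq_zero.1 ((conj_diag2_apply_one_zero A ht0).symm.trans h10)).resolve_right sub_inv_ne
    have row_zero : A.val 0 0 * A.val 0 1 = 0 :=
      (mul_eq_zero.1 ((conj_diag2_apply_zero_one A ht0).symm.trans h01)).resolve_right sub_inv_ne'
    rw [mem_diagonalTorus_iff]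
    rcases mul_eq_zero.1 row_one with h | h <;> rcases mul_eq_zero.1 row_zero with h' | h' <;>
      simp_all
  · rintro (hA | ⟨h00, h11⟩)
    · exact Subgroup.le_normalizer hA
    · have hb : A.val 0 1 ≠ 0 := by rintro hb; simp [h00, hb] at det_eq
      have hc : A.val 1 0 ≠ 0 := by rintro hc; simp [h00, hc] at det_eq
      refine fun D ↦ ?_
      simp [mem_diagonalTorus_iff, coe_inv, adjugate_fin_two, mul_apply, and_comm, *]

theorem exists_ne_zero_mul_add_inv_mul_eq [IsAlgClosed k] {a d c : k} (hc : c ≠ 0)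
    (had : a ≠ 0 ∨ d ≠ 0) : ∃ s ≠ 0, s * a + s⁻¹ * d = c := by
  rcases eq_or_ne a 0 with rfl | ha
  · have hd : d ≠ 0 := had.resolve_left (not_not.2 rfl)
    exact ⟨d / c, div_ne_zero hd hc, by rw [mul_zero, zero_add, inv_div, div_mul_cancel₀ _ hd]⟩
  rcases eq_or_ne d 0 with rfl | hd
  · exact ⟨c / a, div_ne_zero hc ha, by rw [mul_zero, add_zero, div_mul_cancel₀ _ ha]⟩
  obtain ⟨s, hs⟩ := IsAlgClosed.exists_root
    (Polynomial.C a * Polynomial.X ^ 2 + Polynomial.C (-c) * Polynomial.X + Polynomial.C d) (by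
      rw [Polynomial.degree_quadratic ha]; decide)
  have root_eq : a * s ^ 2 - c * s + d = 0 := by
    simpa [Polynomial.IsRoot, sub_eq_add_neg] using hs
  have hs0 : s ≠ 0 := by
    rintro rfl
    exact hd (by simpa using root_eq)
  refine ⟨s, hs0, ?_⟩
  field_simp
  linear_combination root_eq

theorem eq_diagonalTorus_or_eq_normalizer [IsAlgClosed k] [NeZero (2 : k)]
    {K : Subgroup SL(2, k)} (hK : diagonalTorus k ≤ K)
    (hunip : ∀ A ∈ K, A.val.trace = 2 → A = 1) :
    K = diagonalTorus k ∨ K = Subgroup.normalizer (diagonalTorus k : Set SL(2, k)) := by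
  have diag_or_antidiag : ∀ A ∈ K, A ∈ diagonalTorus k ∨ (A.val 0 0 = 0 ∧ A.val 1 1 = 0) := by
    refine fun A hA ↦ or_iff_not_imp_right.2 fun hne ↦ ?_
    obtain ⟨s, hs, trace_eq⟩ := exists_ne_zero_mul_add_inv_mul_eq two_ne_zero (not_and_or.1 hne)
    have diag_mem : diag2 s hs ∈ diagonalTorus k := diag2_mem_diagonalTorus hs
    have mul_eq_one : diag2 s hs * A = 1 := hunip _ (mul_mem (hK diag_mem) hA) <| by
      simpa [trace_fin_two, diag2_coe', mul_apply, vecMul, dotProduct] using trace_eq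
    rw [eq_inv_of_mul_eq_one_right mul_eq_one]
    exact inv_mem diag_mem
  by_cases hKT : K ≤ diagonalTorus k
  · exact Or.inl (hKT.antisymm hK)
  obtain ⟨w, hwK, hwT⟩ := SetLike.not_le_iff_exists.1 hKT
  obtain ⟨w00, w11⟩ := (diag_or_antidiag w hwK).resolve_left hwT
  refine Or.inr (le_antisymm
    (fun A hA ↦ mem_normalizer_diagonalTorus_iff.2 (diag_or_antidiag A hA)) fun A hA ↦ ?_)
  rcases mem_normalizer_diagonalTorus_iff.1 hA with hA | ⟨h00, h11⟩
  · exact hK hA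
  · refine (Subgroup.mul_mem_cancel_right K (inv_mem hwK)).1 (hK ?_)
    simp [mem_diagonalTorus_iff, coe_inv, adjugate_fin_two, mul_apply, *]

namespace IsZariskiClosedSL

variable [IsAlgClosed k] {K : Subgroup SL(2, k)}

theorem exists_upperUnipotent_le_conj_smul [CharZero k]
    (hK : IsZariskiClosedSL (K : Set SL(2, k))) {A : SL(2, k)} (hAK : A ∈ K)
    (hA : A ≠ 1) (htr : A.val.trace = 2) :
    ∃ Q : SL(2, k), upperUnipotent k ≤ MulAut.conj Q • K := by
  obtain ⟨Q, b, hb, hQA⟩ := exists_conj_eq_transvection hA htr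
  exact ⟨Q, upperUnipotent_le_range_transvectionHom.trans <|
    (hK.conj_smul Q).transvectionHom_range_le zero_ne_one hb
      (hQA ▸ Subgroup.smul_mem_pointwise_smul A (MulAut.conj Q) K hAK)⟩

theorem exists_diagonalTorus_le_conj_smul {F : Type*} [Field F] [Algebra F k]
    (hK : IsZariskiClosedSL (K : Set SL(2, k))) {A : SL(2, k)} (hAK : A ∈ K)
    (htr : Transcendental F A.val.trace) :
    ∃ Q : SL(2, k), diagonalTorus k ≤ MulAut.conj Q • K := by
  have trace_sq_ne : A.val.trace ^ 2 ≠ 4 := fun h ↦ htr <| IsAlgebraic.of_pow two_pos <| by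
    rw [h]
    exact_mod_cast isAlgebraic_natCast (R := F) (A := k) 4
  obtain ⟨Q, a, hQA⟩ := exists_conj_eq_diag2nHom trace_sq_ne
  have ha : ¬ IsOfFinOrder a := fun ha ↦ htr <| by
    rw [← trace_conj Q, hQA]
    exact isAlgebraic_trace_diag2nHom ha
  exact ⟨Q, diagonalTorus_le_range_diag2nHom.trans <|
    (hK.conj_smul Q).diag2nHom_range_le zero_ne_one ha
      (hQA ▸ Subgroup.smul_mem_pointwise_smul A (MulAut.conj Q) K hAK)⟩

theorem exists_conj_smul_eq_or_upperUnipotent_le [CharZero k] [Uncountable k]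
    (hK : IsZariskiClosedSL (K : Set SL(2, k))) (hinf : (K : Set SL(2, k)).Infinite) :
    ∃ Q : SL(2, k), MulAut.conj Q • K = diagonalTorus k ∨
      MulAut.conj Q • K = Subgroup.normalizer (diagonalTorus k : Set SL(2, k)) ∨
      upperUnipotent k ≤ MulAut.conj Q • K := by
  by_cases! hunip : ∃ A ∈ K, A.val.trace = 2 ∧ A ≠ 1
  · obtain ⟨A, hAK, htr, hA⟩ := hunip
    obtain ⟨Q, hQ⟩ := hK.exists_upperUnipotent_le_conj_smul hAK hA htr
    exact ⟨Q, .inr (.inr hQ)⟩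
  · obtain ⟨A, hAK, htr⟩ := hK.exists_mem_transcendental_trace hinf (by simpa using hunip)
    obtain ⟨Q, hQ⟩ := hK.exists_diagonalTorus_le_conj_smul hAK htr
    have conj_unip : ∀ B ∈ MulAut.conj Q • K, B.val.trace = 2 → B = 1 := by
      rintro _ ⟨B, hB, rfl⟩ htrB
      obtain rfl : B = 1 := hunip B hB ((trace_conj Q B).symm.trans htrB)
      exact map_one (MulAut.conj Q)
    exact ⟨Q, (eq_diagonalTorus_or_eq_normalizer hQ conj_unip).imp_right .inl⟩

end IsZariskiClosedSL

end SpecialLinearTwo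

section ProjectiveLinear

open Pointwise

theorem map_normalizer_of_surjective_of_ker_le {G N : Type*} [Group G] [Group N] {f : G →* N}
    (hf : Function.Surjective f) {H : Subgroup G} (hH : f.ker ≤ H) :
    (Subgroup.normalizer (H : Set G)).map f = Subgroup.normalizer (H.map f : Set N) := by
  rw [← Subgroup.map_comap_eq_self_of_surjective hf (Subgroup.normalizer (H.map f : Set N)),
    Subgroup.comap_normalizer_eq_of_surjective _ hf, Subgroup.comap_map_eq_self hH]

theorem map_conj_smul_comap {G N : Type*} [Group G] [Group N] {f : G →* N}
    (hf : Function.Surjective f) (g : G) (H : Subgroup N) :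
    (MulAut.conj g • H.comap f).map f = MulAut.conj (f g) • H := by
  have map_conj : f.comp (MulAut.conj g).toMonoidHom = (MulAut.conj (f g)).toMonoidHom.comp f := by
    ext
    simp
  calc (MulAut.conj g • H.comap f).map f
      = (H.comap f).map (f.comp (MulAut.conj g).toMonoidHom) := Subgroup.map_map _ _ _
    _ = ((H.comap f).map f).map (MulAut.conj (f g)).toMonoidHom := by
        rw [map_conj, Subgroup.map_map]
    _ = MulAut.conj (f g) • H := by
        rw [Subgroup.map_comap_eq_self_of_surjective hf]
        rfl

theorem pglPr_surjective : Function.Surjective pglPr := QuotientGroup.mk'_surjective _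

theorem ker_pglPr_le_diagonalTorus : pglPr.ker ≤ diagonalTorus ℂ := by
  intro A hA
  rw [pglPr, QuotientGroup.ker_mk'] at hA
  obtain ⟨c, -, hc⟩ := Matrix.SpecialLinearGroup.mem_center_iff.1 hA
  simp [mem_diagonalTorus_iff, ← hc]

theorem torusNormalizerPGL2_eq : torusNormalizerPGL2 =
    ((Subgroup.normalizer (diagonalTorus ℂ : Set SL2)).map pglPr : Set PGL2) := by
  rw [map_normalizer_of_surjective_of_ker_le pglPr_surjective ker_pglPr_le_diagonalTorus]
  change torusNormalizerPGL2 = (Subgroup.normalizer torusPGL2 : Set PGL2)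
  ext x
  rw [SetLike.mem_coe, Subgroup.mem_set_normalizer_iff]
  refine ⟨fun h t ↦ ⟨fun ht ↦ (h t ht).1, fun ht ↦ ?_⟩, fun h t ht ↦ ⟨(h t).1 ht, (h _).2 ?_⟩⟩
  · simpa [mul_assoc] using (h _ ht).2
  · simpa [mul_assoc] using ht

theorem spherical_subgroups_of_pgl2_general (H : Subgroup PGL2)
    (hclosed : IsZariskiClosed (H : Set PGL2)) (hposdim : (H : Set PGL2).Infinite) :
    ∃ g : PGL2,
      ((fun h => g * h * g⁻¹) '' (H : Set PGL2) = torusPGL2) ∨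
      ((fun h => g * h * g⁻¹) '' (H : Set PGL2) = torusNormalizerPGL2) ∨
      (unipPGL2 ⊆ (fun h => g * h * g⁻¹) '' (H : Set PGL2)) := by
  have : Uncountable ℂ := Set.not_countable_univ_iff.1 not_countable_complex
  have preimage_closed : IsZariskiClosedSL (H.comap pglPr : Set SL2) := hclosed
  obtain ⟨Q, hQ⟩ := preimage_closed.exists_conj_smul_eq_or_upperUnipotent_le
    (hposdim.preimage (by simp [pglPr_surjective.range_eq]))
  refine ⟨pglPr Q, ?_⟩
  have image_eq : (fun h ↦ pglPr Q * h * (pglPr Q)⁻¹) '' (H : Set PGL2) =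
      ((MulAut.conj Q • H.comap pglPr).map pglPr : Set PGL2) := by
    rw [map_conj_smul_comap pglPr_surjective]
    rfl
  rw [image_eq, torusNormalizerPGL2_eq]
  exact hQ.imp (fun h ↦ by rw [h]; rfl) (.imp (fun h ↦ by rw [h]) fun h ↦ Set.image_mono h)

end ProjectiveLinear

theorem spherical_subgroups_of_pgl2 (H : Subgroup PGL2)
    (hclosed : IsZariskiClosed (H : Set PGL2))
    (hposdim : (H : Set PGL2).Infinite)      -- positive dimension
    (hproper : H ≠ ⊤)
    -- H is spherical: some translate B·g·H is Zariski dense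
    (hspherical : ∃ g : PGL2,
      IsZariskiDense {x : PGL2 | ∃ b ∈ borelPGL2, ∃ h ∈ H, x = b * g * h}) :
    ∃ g : PGL2,
      ((fun h => g * h * g⁻¹) '' (H : Set PGL2) = torusPGL2) ∨
      ((fun h => g * h * g⁻¹) '' (H : Set PGL2) = torusNormalizerPGL2) ∨
      (unipPGL2 ⊆ (fun h => g * h * g⁻¹) '' (H : Set PGL2)) :=
  spherical_subgroups_of_pgl2_general H hclosed hposdim
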